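/- Let T : M → M be any mapping. Then T commutes with the utility transform T^u for every utility function u (i.e., T ∘ T^u = T^u ∘ T for all u ∈ F_U) if and only if there exists a distortion function d ∈ F_D such that T = T_d. -/

import Mathlib

/-!
Since `{u ≤ y}` is closed, `T^u K y` is the only `h ∈ [0, 1]` such that `K s ≤ h` whenever
`u s ≤ y` and `h ≤ K s` whenever `y < u s`. These inequalities survive a distortion, so `T_d`
commutes with `T^u`.

Conversely, put `d p = T (p δ₀ + (1 - p) δ₁) 0`. Given a cdf `F` and a point `c`, the cdf
`G = F ∘ collapse c` is `F` with a gap of length one inserted at `c`. Collapsing the gap sends `G`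
back to `F`, while a ramp across the gap sends `G` to the two-point distribution with mass `F c` at
`0`. Commutation with these two utility functions traps `d (F c)` between `T F x`, for any `x < c`,
and `T F c`. Letting `c` decrease to `x` gives `T F x = (d ∘ F)(x+)`, and for the uniform
distribution the same bounds show that `d` is a distortion function.
-/

open MeasureTheory Filter Topology Set

noncomputable section

/-- The set of cdfs of compactly supported probability distributions on ℝ:
increasing, right-continuous, equal to `0` for all sufficiently small `x` and
equal to `1` for all sufficiently large `x`. -/
def mSet : Set (ℝ → ℝ) :=
  {F | Monotone F ∧ (∀ x, ContinuousWithinAt F (Set.Ici x) x) ∧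
    (∃ a, ∀ x ≤ a, F x = 0) ∧ (∃ b, ∀ x, b ≤ x → F x = 1)}

/-- The set of cdfs of all probability distributions on ℝ: increasing,
right-continuous, with limit `0` at `-∞` and limit `1` at `+∞`. -/
def m0Set : Set (ℝ → ℝ) :=
  {F | Monotone F ∧ (∀ x, ContinuousWithinAt F (Set.Ici x) x) ∧
    Tendsto F atBot (𝓝 0) ∧ Tendsto F atTop (𝓝 1)}

/-- A utility function: increasing (non-strict) and continuous. -/
def IsUF (u : ℝ → ℝ) : Prop := Monotone u ∧ Continuous u

/-- An increasing and left-continuous function on ℝ. -/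
def IsLeftCtsIncr (u : ℝ → ℝ) : Prop :=
  Monotone u ∧ ∀ x, ContinuousWithinAt u (Set.Iic x) x

/-- A distortion function: an increasing function `d : [0,1] → [0,1]` with
`d 0 = 0` and `d 1 = 1` (values outside `[0,1]` are irrelevant). -/
def IsDF (d : ℝ → ℝ) : Prop :=
  MonotoneOn d (Set.Icc 0 1) ∧ d 0 = 0 ∧ d 1 = 1

/-- Right-continuity of a distortion function on `[0,1)`. -/
def DFRightCts (d : ℝ → ℝ) : Prop :=
  ∀ x ∈ Set.Ico (0:ℝ) 1, ContinuousWithinAt d (Set.Ioi x) x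

/-- A distortion function with moreover `d(0+) = 0` and `d(1-) = 1`. -/
def IsDFhat (d : ℝ → ℝ) : Prop :=
  IsDF d ∧ Tendsto d (𝓝[>] (0:ℝ)) (𝓝 0) ∧ Tendsto d (𝓝[<] (1:ℝ)) (𝓝 1)

/-- The probability distortion generated by `d`:  `T_d F x = (d ∘ F)(x+)`,
the right limit of `d ∘ F` at `x`. -/
noncomputable def distortT (d F : ℝ → ℝ) : ℝ → ℝ :=
  fun x => Function.rightLim (d ∘ F) x

/-- The utility transform `T^u`: it maps a cdf `F` to the cdf of the
pushforward under `u` of the probability measure with cdf `F`. -/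
noncomputable def utilityT (u F : ℝ → ℝ) : ℝ → ℝ := by
  classical
  exact
    if h : Monotone F ∧ ∀ x, ContinuousWithinAt F (Set.Ici x) x then
      fun x => ((StieltjesFunction.measure ⟨F, h.1, h.2⟩).map u (Set.Iic x)).toReal
    else F

/-- Left quantile `F_L^{-1}(p) = inf {x | F x ≥ p}`. -/
noncomputable def leftQ (F : ℝ → ℝ) (p : ℝ) : ℝ := sInf {x | p ≤ F x}

/-- Right quantile `F_R^{-1}(p) = inf {x | F x > p}`. -/
noncomputable def rightQ (F : ℝ → ℝ) (p : ℝ) : ℝ := sInf {x | p < F x}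

lemma rightLim_eq_of_forall_gt {α β : Type*} [LinearOrder α] [TopologicalSpace α] [OrderTopology α]
    [LinearOrder β] [TopologicalSpace β] [OrderTopology β] {f g : α → β} {x : α} [(𝓝[>] x).NeBot]
    (hg : ContinuousWithinAt g (Ici x) x) (hle : ∀ c > x, g x ≤ f c) (hge : ∀ c > x, f c ≤ g c) :
    Function.rightLim f x = g x :=
  rightLim_eq_of_tendsto <|
    tendsto_of_tendsto_of_tendsto_of_le_of_le' tendsto_const_nhds
      (hg.mono Ioi_subset_Ici_self) (eventually_mem_nhdsWithin.mono hle)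
      (eventually_mem_nhdsWithin.mono hge)

lemma tendsto_atBot_of_mem_mSet {F : ℝ → ℝ} (hF : F ∈ mSet) : Tendsto F atBot (𝓝 0) := by
  obtain ⟨a, ha⟩ := hF.2.2.1
  exact tendsto_const_nhds.congr' ((eventually_le_atBot a).mono fun x hx => (ha x hx).symm)

lemma tendsto_atTop_of_mem_mSet {F : ℝ → ℝ} (hF : F ∈ mSet) : Tendsto F atTop (𝓝 1) := by
  obtain ⟨b, hb⟩ := hF.2.2.2
  exact tendsto_const_nhds.congr' ((eventually_ge_atTop b).mono fun x hx => (hb x hx).symm)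

lemma mem_Icc_of_mem_mSet {F : ℝ → ℝ} (hF : F ∈ mSet) (x : ℝ) : F x ∈ Icc (0 : ℝ) 1 :=
  ⟨hF.1.le_of_tendsto (tendsto_atBot_of_mem_mSet hF) x,
    hF.1.ge_of_tendsto (tendsto_atTop_of_mem_mSet hF) x⟩

lemma comp_mem_mSet {F u : ℝ → ℝ} (hF : F ∈ mSet) (hu : Monotone u) (hsurj : u.Surjective) :
    F ∘ u ∈ mSet := by
  obtain ⟨a, ha⟩ := hF.2.2.1
  obtain ⟨b, hb⟩ := hF.2.2.2
  obtain ⟨a', rfl⟩ := hsurj a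
  obtain ⟨b', rfl⟩ := hsurj b
  refine ⟨hF.1.comp hu, fun x => ?_, ⟨a', fun x hx => ha _ (hu hx)⟩, ⟨b', fun x hx => hb _ (hu hx)⟩⟩
  exact (hF.2.1 (u x)).comp (hu.continuous_of_surjective hsurj).continuousWithinAt
    fun _ hz => hu hz

lemma le_of_le_on_isClosed_of_le_on_compl {K : ℝ → ℝ} (hK : K ∈ mSet) {S : Set ℝ}
    (hS : IsClosed S) {a b : ℝ} (ha : 0 ≤ a) (hb : b ≤ 1) (hle : ∀ s ∈ S, K s ≤ a)
    (hge : ∀ s ∉ S, b ≤ K s) : b ≤ a := by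
  by_contra! hab
  -- The supremum of `{K < b} ⊆ S` lies in `S`, so there `K ≤ a < b`, and by right-continuity
  -- `K < b` persists beyond the supremum.
  obtain ⟨l, hl⟩ := hK.2.2.1
  obtain ⟨r, hr⟩ := hK.2.2.2
  have hne : {s | K s < b}.Nonempty := ⟨l, (hl l le_rfl).trans_lt (ha.trans_lt hab)⟩
  have hbdd : BddAbove {s | K s < b} := ⟨r, fun s hs => le_of_not_ge fun hrs =>
    (hs.trans_le hb).ne (hr s hrs)⟩
  have hsub : {s | K s < b} ⊆ S := fun s hs => by_contra fun hsS => (hge s hsS).not_gt hs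
  have hlt : K (sSup {s | K s < b}) < b :=
    (hle _ (closure_minimal hsub hS (csSup_mem_closure hne hbdd))).trans_lt hab
  obtain ⟨t, ht, hst⟩ := ((((hK.2.1 _).mono Ioi_subset_Ici_self).eventually_lt_const hlt).and
    self_mem_nhdsWithin).exists
  exact (le_csSup hbdd ht).not_gt hst

/-- The probability measure on `ℝ` with cdf `F`, the one that `utilityT` pushes forward. -/
def cdfMeasure {F : ℝ → ℝ} (hF : F ∈ mSet) : Measure ℝ :=
  StieltjesFunction.measure ⟨F, hF.1, hF.2.1⟩

instance isProbabilityMeasure_cdfMeasure {F : ℝ → ℝ} (hF : F ∈ mSet) :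
    IsProbabilityMeasure (cdfMeasure hF) :=
  StieltjesFunction.isProbabilityMeasure _ (tendsto_atBot_of_mem_mSet hF)
    (tendsto_atTop_of_mem_mSet hF)

lemma cdfMeasure_real_Iic {F : ℝ → ℝ} (hF : F ∈ mSet) (x : ℝ) :
    (cdfMeasure hF).real (Iic x) = F x := by
  rw [← ProbabilityTheory.cdf_eq_real, cdfMeasure,
    ProbabilityTheory.cdf_measure_stieltjesFunction _ (tendsto_atBot_of_mem_mSet hF)
      (tendsto_atTop_of_mem_mSet hF)]

lemma utilityT_eq_real_map {F : ℝ → ℝ} (hF : F ∈ mSet) (u : ℝ → ℝ) (y : ℝ) :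
    utilityT u F y = ((cdfMeasure hF).map u).real (Iic y) := by
  rw [utilityT, dif_pos ⟨hF.1, hF.2.1⟩]
  rfl

lemma utilityT_eq_real_preimage {F u : ℝ → ℝ} (hF : F ∈ mSet) (hu : Measurable u) (y : ℝ) :
    utilityT u F y = (cdfMeasure hF).real (u ⁻¹' Iic y) := by
  rw [utilityT_eq_real_map hF, map_measureReal_apply hu measurableSet_Iic]

lemma utilityT_eq_cdf {F u : ℝ → ℝ} (hF : F ∈ mSet) (hu : Measurable u) :
    utilityT u F = ProbabilityTheory.cdf ((cdfMeasure hF).map u) := by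
  have := Measure.isProbabilityMeasure_map (μ := cdfMeasure hF) hu.aemeasurable
  ext y
  rw [utilityT_eq_real_map hF, ProbabilityTheory.cdf_eq_real]

lemma le_utilityT {F u : ℝ → ℝ} (hF : F ∈ mSet) (hu : Monotone u) {s y : ℝ} (h : u s ≤ y) :
    F s ≤ utilityT u F y := by
  rw [utilityT_eq_real_preimage hF hu.measurable, ← cdfMeasure_real_Iic hF s]
  exact measureReal_mono fun x hx => (hu hx).trans h

lemma utilityT_le {F u : ℝ → ℝ} (hF : F ∈ mSet) (hu : Monotone u) {s y : ℝ} (h : y < u s) :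
    utilityT u F y ≤ F s := by
  rw [utilityT_eq_real_preimage hF hu.measurable, ← cdfMeasure_real_Iic hF s]
  exact measureReal_mono fun x hx => (hu.reflect_lt (lt_of_le_of_lt hx h)).le

lemma utilityT_mem_mSet {F u : ℝ → ℝ} (hF : F ∈ mSet) (hu : Monotone u) : utilityT u F ∈ mSet := by
  have hcdf := utilityT_eq_cdf hF hu.measurable
  obtain ⟨a, ha⟩ := hF.2.2.1
  obtain ⟨b, hb⟩ := hF.2.2.2
  refine ⟨hcdf ▸ ProbabilityTheory.monotone_cdf _,
    hcdf ▸ (ProbabilityTheory.cdf _).right_continuous,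
    ⟨u a - 1, fun y hy => le_antisymm ?_ (hcdf ▸ ProbabilityTheory.cdf_nonneg _ y)⟩,
    ⟨u b, fun y hy => le_antisymm (hcdf ▸ ProbabilityTheory.cdf_le_one _ y) ?_⟩⟩
  · exact (utilityT_le hF hu (by linarith)).trans_eq (ha a le_rfl)
  · exact (hb b le_rfl).symm.trans_le (le_utilityT hF hu hy)

lemma utilityT_eq_of_forall {K u : ℝ → ℝ} (hK : K ∈ mSet) (hu : Monotone u)
    (hlsc : LowerSemicontinuous u) {y h : ℝ} (hh : h ∈ Icc (0 : ℝ) 1)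
    (hle : ∀ s, u s ≤ y → K s ≤ h) (hge : ∀ s, y < u s → h ≤ K s) : utilityT u K y = h := by
  have hclosed : IsClosed (u ⁻¹' Iic y) := hlsc.isClosed_preimage y
  have hmem := mem_Icc_of_mem_mSet (utilityT_mem_mSet hK hu) y
  exact le_antisymm
    (le_of_le_on_isClosed_of_le_on_compl hK hclosed hh.1 hmem.2 hle
      fun s hs => utilityT_le hK hu (not_le.1 hs))
    (le_of_le_on_isClosed_of_le_on_compl hK hclosed hmem.1 hh.2 (fun s hs => le_utilityT hK hu hs)
      fun s hs => hge s (not_le.1 hs))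

lemma utilityT_comp_self {F u : ℝ → ℝ} (hF : F ∈ mSet) (hu : Monotone u) (hsurj : u.Surjective) :
    utilityT u (F ∘ u) = F :=
  funext fun y => utilityT_eq_of_forall (comp_mem_mSet hF hu hsurj) hu
    (hu.continuous_of_surjective hsurj).lowerSemicontinuous (mem_Icc_of_mem_mSet hF y)
    (fun _ hs => hF.1 hs) (fun _ hs => hF.1 hs.le)

lemma monotone_distortion_comp {d F : ℝ → ℝ} (hd : IsDF d) (hF : F ∈ mSet) : Monotone (d ∘ F) :=
  fun _ _ h => hd.1 (mem_Icc_of_mem_mSet hF _) (mem_Icc_of_mem_mSet hF _) (hF.1 h)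

lemma distortT_mem_mSet {d F : ℝ → ℝ} (hd : IsDF d) (hF : F ∈ mSet) : distortT d F ∈ mSet := by
  have hmono := monotone_distortion_comp hd hF
  obtain ⟨a, ha⟩ := hF.2.2.1
  obtain ⟨b, hb⟩ := hF.2.2.2
  have hzero : ∀ x ≤ a, (d ∘ F) x = 0 := fun x hx => by rw [Function.comp_apply, ha x hx, hd.2.1]
  have hone : ∀ x, b ≤ x → (d ∘ F) x = 1 := fun x hx => by
    rw [Function.comp_apply, hb x hx, hd.2.2]
  refine ⟨hmono.rightLim, hmono.stieltjesFunction.right_continuous,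
    ⟨a - 1, fun x hx => le_antisymm ?_ ?_⟩, ⟨b, fun x hx => le_antisymm ?_ ?_⟩⟩
  · exact (hmono.rightLim_le (by linarith)).trans_eq (hzero a le_rfl)
  · exact (hzero x (by linarith)).symm.trans_le (hmono.le_rightLim le_rfl)
  · exact (hmono.rightLim_le (lt_add_one x)).trans_eq (hone (x + 1) (by linarith))
  · exact (hone x hx).symm.trans_le (hmono.le_rightLim le_rfl)

theorem distortT_utilityT_comm {d F u : ℝ → ℝ} (hd : IsDF d) (hF : F ∈ mSet) (hu : IsUF u) :
    distortT d (utilityT u F) = utilityT u (distortT d F) := by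
  have hUF := utilityT_mem_mSet hF hu.1
  have hmonoF := monotone_distortion_comp hd hF
  have hmonoUF := monotone_distortion_comp hd hUF
  ext y
  refine (utilityT_eq_of_forall (distortT_mem_mSet hd hF) hu.1 hu.2.lowerSemicontinuous
    (mem_Icc_of_mem_mSet (distortT_mem_mSet hd hUF) y) (fun s hs => ?_) fun s hs => ?_).symm
  · refine ge_of_tendsto (hmonoUF.tendsto_rightLim y) ?_
    filter_upwards [self_mem_nhdsWithin] with z hz
    obtain ⟨t, htz, hst⟩ : ∃ t, u t < z ∧ s < t :=
      (((hu.2.continuousWithinAt (s := Ioi s)).eventually_lt_const (hs.trans_lt hz)).and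
        self_mem_nhdsWithin).exists
    calc distortT d F s ≤ d (F t) := hmonoF.rightLim_le hst
      _ ≤ d (utilityT u F z) :=
        hd.1 (mem_Icc_of_mem_mSet hF t) (mem_Icc_of_mem_mSet hUF z) (le_utilityT hF hu.1 htz.le)
  · obtain ⟨z, hyz, hzs⟩ := exists_between hs
    calc distortT d (utilityT u F) y ≤ d (utilityT u F z) := hmonoUF.rightLim_le hyz
      _ ≤ d (F s) :=
        hd.1 (mem_Icc_of_mem_mSet hUF z) (mem_Icc_of_mem_mSet hF s) (utilityT_le hF hu.1 hzs)
      _ ≤ distortT d F s := hmonoF.le_rightLim le_rfl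

/-- The cdf of the two-point distribution `p δ₀ + (1 - p) δ₁`, from which the distortion function
of `T` is recovered. -/
def twoPointCdf (p : ℝ) : ℝ → ℝ := fun x => if x < 0 then 0 else if x < 1 then p else 1

/-- The distortion function of a map `T` commuting with all utility transforms, read off from the
values at `0` of the images of the two-point distributions. -/
def inducedDF (T : (ℝ → ℝ) → ℝ → ℝ) (p : ℝ) : ℝ := T (twoPointCdf p) 0

/-- The utility function collapsing the gap `[c, c + 1]` to the point `c`; composing a cdf with it
inserts that gap into the distribution. -/
def collapse (c : ℝ) : ℝ → ℝ := fun x => max (min x c) (x - 1)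

/-- The utility function rising linearly from `0` to `1` on `[c, c + 1]`, constant elsewhere. It is
also the cdf of the uniform distribution on `[c, c + 1]`. -/
def ramp (c : ℝ) : ℝ → ℝ := fun x => max 0 (min 1 (x - c))

lemma isUF_collapse (c : ℝ) : IsUF (collapse c) :=
  ⟨fun x y h => by unfold collapse; gcongr, by unfold collapse; fun_prop⟩

lemma surjective_collapse (c : ℝ) : (collapse c).Surjective := by
  intro y
  rcases le_total y c with h | h
  · exact ⟨y, by simp [collapse, h]⟩
  · exact ⟨y + 1, by simp [collapse, h]⟩

lemma comp_collapse_mem_mSet {F : ℝ → ℝ} (hF : F ∈ mSet) (c : ℝ) : F ∘ collapse c ∈ mSet :=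
  comp_mem_mSet hF (isUF_collapse c).1 (surjective_collapse c)

lemma isUF_ramp (c : ℝ) : IsUF (ramp c) :=
  ⟨fun x y h => by unfold ramp; gcongr, by unfold ramp; fun_prop⟩

lemma ramp_mem_mSet (c : ℝ) : ramp c ∈ mSet :=
  ⟨(isUF_ramp c).1, fun _ => (isUF_ramp c).2.continuousWithinAt,
    ⟨c, fun x hx => by simp [ramp, hx]⟩, ⟨c + 1, fun x hx => by grind [ramp]⟩⟩

lemma ramp_zero_of_mem_Icc {p : ℝ} (hp : p ∈ Icc (0 : ℝ) 1) : ramp 0 p = p := by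
  simp [ramp, hp.1, hp.2]

lemma utilityT_ramp_comp_collapse {F : ℝ → ℝ} (hF : F ∈ mSet) (c : ℝ) :
    utilityT (ramp c) (F ∘ collapse c) = twoPointCdf (F c) := by
  have hG := comp_collapse_mem_mSet hF c
  have hFc := mem_Icc_of_mem_mSet hF c
  ext y
  refine utilityT_eq_of_forall hG (isUF_ramp c).1 (isUF_ramp c).2.lowerSemicontinuous ?_ ?_ ?_
  · unfold twoPointCdf
    split_ifs <;> simp [hFc.1, hFc.2]
  · intro s hs
    unfold twoPointCdf
    split_ifs with hy₀ hy₁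
    · exact absurd (hs.trans_lt hy₀) (show 0 ≤ ramp c s from le_max_left _ _).not_gt
    · exact hF.1 (show collapse c s ≤ c by grind [ramp, collapse])
    · exact (mem_Icc_of_mem_mSet hG s).2
  · intro s hs
    unfold twoPointCdf
    split_ifs with hy₀ hy₁
    · exact (mem_Icc_of_mem_mSet hG s).1
    · exact hF.1 (show c ≤ collapse c s by grind [ramp, collapse])
    · exact absurd (hs.trans_le (show ramp c s ≤ 1 by grind [ramp])) hy₁

section Commuting

variable {T : (ℝ → ℝ) → ℝ → ℝ} (hT : ∀ F ∈ mSet, T F ∈ mSet)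
  (hcomm : ∀ u : ℝ → ℝ, IsUF u → ∀ F ∈ mSet, T (utilityT u F) = utilityT u (T F))

include hcomm

lemma eq_utilityT_collapse_of_commute {F : ℝ → ℝ} (hF : F ∈ mSet) (c : ℝ) :
    T F = utilityT (collapse c) (T (F ∘ collapse c)) := by
  rw [← hcomm _ (isUF_collapse c) _ (comp_collapse_mem_mSet hF c),
    utilityT_comp_self hF (isUF_collapse c).1 (surjective_collapse c)]

lemma inducedDF_eq_utilityT_ramp_of_commute {F : ℝ → ℝ} (hF : F ∈ mSet) (c : ℝ) :
    inducedDF T (F c) = utilityT (ramp c) (T (F ∘ collapse c)) 0 := by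
  rw [← hcomm _ (isUF_ramp c) _ (comp_collapse_mem_mSet hF c), utilityT_ramp_comp_collapse hF,
    inducedDF]

include hT

lemma inducedDF_le_of_commute {F : ℝ → ℝ} (hF : F ∈ mSet) (c : ℝ) :
    inducedDF T (F c) ≤ T F c := by
  have hTG := hT _ (comp_collapse_mem_mSet hF c)
  calc inducedDF T (F c) = utilityT (ramp c) (T (F ∘ collapse c)) 0 :=
        inducedDF_eq_utilityT_ramp_of_commute hcomm hF c
    _ ≤ T (F ∘ collapse c) (c + 1) := utilityT_le hTG (isUF_ramp c).1 (by simp [ramp])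
    _ ≤ utilityT (collapse c) (T (F ∘ collapse c)) c :=
        le_utilityT hTG (isUF_collapse c).1 (by simp [collapse])
    _ = T F c := by rw [← eq_utilityT_collapse_of_commute hcomm hF]

lemma le_inducedDF_of_commute {F : ℝ → ℝ} (hF : F ∈ mSet) {x c : ℝ} (hxc : x < c) :
    T F x ≤ inducedDF T (F c) := by
  have hTG := hT _ (comp_collapse_mem_mSet hF c)
  calc T F x = utilityT (collapse c) (T (F ∘ collapse c)) x := by
        rw [← eq_utilityT_collapse_of_commute hcomm hF]
    _ ≤ T (F ∘ collapse c) c := utilityT_le hTG (isUF_collapse c).1 (by simpa [collapse])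
    _ ≤ utilityT (ramp c) (T (F ∘ collapse c)) 0 :=
        le_utilityT hTG (isUF_ramp c).1 (by simp [ramp])
    _ = inducedDF T (F c) := (inducedDF_eq_utilityT_ramp_of_commute hcomm hF c).symm

lemma isDF_inducedDF_of_commute : IsDF (inducedDF T) := by
  have hK := hT _ (ramp_mem_mSet 0)
  have hle := fun c => inducedDF_le_of_commute hT hcomm (ramp_mem_mSet 0) c
  have hge := fun {x c : ℝ} (h : x < c) => le_inducedDF_of_commute hT hcomm (ramp_mem_mSet 0) h
  refine ⟨fun p hp q hq hpq => ?_, le_antisymm ?_ ?_, le_antisymm ?_ ?_⟩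
  · rcases hpq.eq_or_lt with rfl | hlt
    · rfl
    · simpa only [ramp_zero_of_mem_Icc hp, ramp_zero_of_mem_Icc hq] using (hle p).trans (hge hlt)
  · obtain ⟨a, ha⟩ := hK.2.2.1
    have h := hle (min a 0)
    rwa [ha _ (min_le_left a 0), show ramp 0 (min a 0) = 0 by simp [ramp]] at h
  · have h := (mem_Icc_of_mem_mSet hK (-1)).1.trans (hge neg_one_lt_zero)
    rwa [ramp_zero_of_mem_Icc unitInterval.zero_mem] at h
  · have h := (hle 1).trans (mem_Icc_of_mem_mSet hK 1).2
    rwa [ramp_zero_of_mem_Icc unitInterval.one_mem] at h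
  · obtain ⟨b, hb⟩ := hK.2.2.2
    have h := hge (lt_add_one (max b 0))
    rwa [hb _ (le_max_left b 0), show ramp 0 (max b 0 + 1) = 1 by simp [ramp]] at h

theorem eq_distortT_inducedDF_of_commute {F : ℝ → ℝ} (hF : F ∈ mSet) :
    T F = distortT (inducedDF T) F :=
  funext fun x => (rightLim_eq_of_forall_gt ((hT F hF).2.1 x)
    (fun _ hc => le_inducedDF_of_commute hT hcomm hF hc)
    fun c _ => inducedDF_le_of_commute hT hcomm hF c).symm

end Commuting

/-- A map `T : M → M` commutes with the utility transform `T^u` for every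
utility function `u` if and only if `T = T_d` for some distortion function `d`. -/
theorem stmt0 (T : (ℝ → ℝ) → ℝ → ℝ) (hT : ∀ F ∈ mSet, T F ∈ mSet) :
    (∀ u : ℝ → ℝ, IsUF u → ∀ F ∈ mSet, T (utilityT u F) = utilityT u (T F)) ↔
      ∃ d : ℝ → ℝ, IsDF d ∧ ∀ F ∈ mSet, T F = distortT d F := by
  constructor
  · intro hcomm
    exact ⟨inducedDF T, isDF_inducedDF_of_commute hT hcomm,
      fun F hF => eq_distortT_inducedDF_of_commute hT hcomm hF⟩
  · rintro ⟨d, hd, hTd⟩ u hu F hF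
    rw [hTd _ (utilityT_mem_mSet hF hu.1), hTd F hF, distortT_utilityT_comm hd hF hu]
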